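/- Let s ≥ 2, let h₁ and h₂ be units of 𝓚, and let a, t₁, t₂ be integers with 2^{s-1} ≤ a ≤ 2^{s-1} + t₁, 0 ≤ t₁ < 2^{s-1}, 0 ≤ t₂ and 2t₁ ≥ a + t₂, such that h₁(x) ≡ x^{a−t₁} h₁(x^{-1}) (mod (x+1)^{2^{s-1}−t₁}) in 𝓚. Let C = ⟨(x+1)^a + u(x+1)^{t₁} h₁(x) + u²(x+1)^{t₂} h₂(x), u(x+1)^{2^{s-1}} + u²(x+1)^{2^{s-1}+t₁−a} x^{a−t₁} h₁(x^{-1}), u²(x+1)^{2^s−a}⟩, and assume Tor_0(C) = ⟨(x+1)^a⟩, Tor_1(C) = ⟨(x+1)^{2^{s-1}}⟩, Tor_2(C) = ⟨(x+1)^{2^s−a}⟩. Then 𝒜(C) = ⟨(x+1)^a + u(x+1)^{t₁} h₁(x) + u²(x+1)^{t₂} F(x), u(x+1)^{2^{s-1}} + u²(x+1)^{2^{s-1}+t₁−a} h₁(x), u²(x+1)^{2^s−a}⟩, where F(x) = h₂(x) + (x+1)^{2t₁−a−t₂} h₁(x)². -/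

import Mathlib

noncomputable section

open Polynomial

/-- The finite field `GF(2^m)`. -/
abbrev Fq (m : ℕ) : Type := GaloisField 2 m

/-- The ring `R₃ = F[u]/⟨u³⟩`. -/
abbrev R3 (m : ℕ) : Type := AdjoinRoot (X ^ 3 : (Fq m)[X])

/-- The polynomial `x^{2^s} + 1` over `R₃`. -/
abbrev gR (m s : ℕ) : (R3 m)[X] := X ^ (2 ^ s) + 1

/-- The polynomial `x^{2^s} + 1` over `F`. -/
abbrev gK (m s : ℕ) : (Fq m)[X] := X ^ (2 ^ s) + 1

/-- The ring `𝓡 = R₃[x]/⟨x^{2^s}+1⟩`. -/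
abbrev RR (m s : ℕ) : Type := AdjoinRoot (gR m s)

/-- The ring `𝓚 = F[x]/⟨x^{2^s}+1⟩`. -/
abbrev KK (m s : ℕ) : Type := AdjoinRoot (gK m s)

/-- The element `u` of `R₃`. -/
def uu (m : ℕ) : R3 m := AdjoinRoot.root _

/-- The element `u` of `𝓡`. -/
def uR (m s : ℕ) : RR m s := algebraMap (R3 m) (RR m s) (uu m)

/-- The element `x` of `𝓡`. -/
def xR (m s : ℕ) : RR m s := AdjoinRoot.root _

/-- The element `x` of `𝓚`. -/
def xK (m s : ℕ) : KK m s := AdjoinRoot.root _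

lemma gR_monic (m s : ℕ) : (gR m s).Monic := by
  have h : (gR m s) = X ^ (2 ^ s) + C 1 := by simp [gR]
  rw [h]; exact monic_X_pow_add_C _ (by positivity)

lemma gK_monic (m s : ℕ) : (gK m s).Monic := by
  have h : (gK m s) = X ^ (2 ^ s) + C 1 := by simp [gK]
  rw [h]; exact monic_X_pow_add_C _ (by positivity)

/-- The standard representative (of degree `< 2^s`) of an element of `𝓡`. -/
def repR (m s : ℕ) (c : RR m s) : (R3 m)[X] := AdjoinRoot.modByMonicHom (gR_monic m s) c

/-- The standard representative (of degree `< 2^s`) of an element of `𝓚`. -/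
def repK (m s : ℕ) (c : KK m s) : (Fq m)[X] := AdjoinRoot.modByMonicHom (gK_monic m s) c

/-- The `j`-th coefficient of the standard representative of `c ∈ 𝓡`. -/
def coeffR (m s : ℕ) (c : RR m s) (j : ℕ) : R3 m := (repR m s c).coeff j

/-- The dot product on `𝓡`. -/
def dotR (m s : ℕ) (c d : RR m s) : R3 m :=
  ∑ j ∈ Finset.range (2 ^ s), coeffR m s c j * coeffR m s d j

/-- The dual of a set of codewords. -/
def dualSet (m s : ℕ) (S : Set (RR m s)) : Set (RR m s) :=
  {c | ∀ d ∈ S, dotR m s c d = 0}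

/-- A cyclic code (ideal of `𝓡`) is self-dual if it coincides with its dual. -/
def IsSelfDual (m s : ℕ) (C : Ideal (RR m s)) : Prop :=
  (C : Set (RR m s)) = dualSet m s (C : Set (RR m s))

/-- The annihilator of a set of codewords. -/
def annSet (m s : ℕ) (S : Set (RR m s)) : Set (RR m s) :=
  {c | ∀ d ∈ S, c * d = 0}

/-- The reciprocal `c*(x) = x^{deg c} c(x⁻¹)` of an element of `𝓡`. -/
def recip (m s : ℕ) (c : RR m s) : RR m s :=
  xR m s ^ (repR m s c).natDegree *
    Polynomial.aeval (Ring.inverse (xR m s)) (repR m s c)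

/-- Reduction `R₃ → F` modulo `u`. -/
def epsR3 (m : ℕ) : R3 m →+* Fq m :=
  AdjoinRoot.lift (RingHom.id (Fq m)) 0 (by simp)

lemma xK_pow_add_one (m s : ℕ) : (xK m s) ^ (2 ^ s) + 1 = 0 := by
  have h := AdjoinRoot.eval₂_root (gK m s)
  simpa [gK, xK] using h

lemma xR_pow_add_one (m s : ℕ) : (xR m s) ^ (2 ^ s) + 1 = 0 := by
  have h := AdjoinRoot.eval₂_root (gR m s)
  simpa [gR, xR] using h

/-- Reduction `μ : 𝓡 → 𝓚` modulo `u`. -/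
def muRK (m s : ℕ) : RR m s →+* KK m s :=
  AdjoinRoot.lift ((algebraMap (Fq m) (KK m s)).comp (epsR3 m)) (xK m s) (by
    simp only [gR, eval₂_add, eval₂_pow, eval₂_X, eval₂_one]
    exact xK_pow_add_one m s)

/-- The natural inclusion `𝓚 → 𝓡`. -/
def KtoR (m s : ℕ) : KK m s →+* RR m s :=
  AdjoinRoot.lift ((algebraMap (R3 m) (RR m s)).comp (algebraMap (Fq m) (R3 m))) (xR m s) (by
    simp only [gK, eval₂_add, eval₂_pow, eval₂_X, eval₂_one]
    exact xR_pow_add_one m s)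

/-- The `i`-th torsion code of a set `S ⊆ 𝓡`. -/
def TorSet (m s : ℕ) (S : Set (RR m s)) (i : ℕ) : Set (KK m s) :=
  muRK m s '' {f | (uR m s) ^ i * f ∈ S}

/-- The torsion degree `T_i`: the (unique) `k` with `Tor_i = ⟨(x+1)^k⟩`. -/
def Tdeg (m s : ℕ) (S : Set (RR m s)) (i : ℕ) : ℕ :=
  sInf {k | TorSet m s S i =
    ((Ideal.span {(xK m s + 1) ^ k} : Ideal (KK m s)) : Set (KK m s))}

/-- Substitution `h(x) ↦ h(x⁻¹)` on `𝓚`. -/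
def invSub (m s : ℕ) (h : KK m s) : KK m s :=
  Polynomial.aeval (Ring.inverse (xK m s)) (repK m s h)

/-! Put `y = x + 1`, so `y ^ 2 ^ s = 0`. If `u ^ k = 0`, an ideal `D` that annihilates `C` is
the whole annihilator as soon as `Tor_i(D)` contains the annihilator of `Tor_{k-1-i}(C)` for every
`i`: an annihilating element is then moved into `D` one power of `u` at a time. For `C` as in the
theorem the torsion exponents `a`, `2 ^ (s - 1)`, `2 ^ s - a` form a self-dual sequence, so an ideal
with the same exponents is the annihilator as soon as its product with `C` vanishes. In
characteristic `2` the cross terms of that product cancel, and the summand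
`(x + 1) ^ (2 * t₁ - a - t₂) * h₁ ^ 2` of `F` is there to cancel `(u * y ^ t₁ * h₁) ^ 2`. -/

section Torsion

variable {R : Type*} [CommRing R] {u : R} {C D : Ideal R}

/-- The preimage in `R` of the `i`-th torsion code of `D`, an ideal of `R / u`. It consists of all
`c` such that `u ^ i * f ∈ D` for some `f ≡ c` modulo `u`, see `mem_torsionIdeal`. -/
def torsionIdeal (u : R) (D : Ideal R) (i : ℕ) : Ideal R :=
  Submodule.comap (LinearMap.mulLeft R (u ^ i)) (D ⊔ Ideal.span {u ^ (i + 1)})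

lemma mem_torsionIdeal {i : ℕ} {c : R} :
    c ∈ torsionIdeal u D i ↔ ∃ d, u ^ i * (c + u * d) ∈ D := by
  rw [torsionIdeal, Submodule.mem_comap, LinearMap.mulLeft_apply, sup_comm,
    Ideal.mem_span_singleton_sup]
  constructor
  · rintro ⟨r, b, hb, h⟩
    refine ⟨-r, ?_⟩
    convert hb using 1
    linear_combination -h
  · rintro ⟨d, hd⟩
    exact ⟨-d, _, hd, by ring⟩

lemma self_mem_torsionIdeal (i : ℕ) : u ∈ torsionIdeal u D i :=
  mem_torsionIdeal.2 ⟨-1, by simp⟩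

lemma pow_mul_mul_eq_zero_of_mem_torsionIdeal {k i j : ℕ} (hu : u ^ k = 0) (hij : i + j + 1 = k)
    {c t : R} (hc : u ^ i * c ∈ C.annihilator) (ht : t ∈ torsionIdeal u C j) :
    u ^ (i + j) * t * c = 0 := by
  obtain ⟨d, hd⟩ := mem_torsionIdeal.1 ht
  have hprod : u ^ i * c * (u ^ j * (t + u * d)) = 0 := Submodule.mem_annihilator.1 hc _ hd
  rw [← hij] at hu
  linear_combination hprod - c * d * hu

theorem annihilator_eq_of_torsionIdeal {k : ℕ} (hu : u ^ k = 0) (hDC : D ≤ C.annihilator)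
    (htor : ∀ i j, i + j + 1 = k → ∀ c,
      (∀ t ∈ torsionIdeal u C j, u ^ (i + j) * t * c = 0) → c ∈ torsionIdeal u D i) :
    C.annihilator = D := by
  have peel : ∀ i ≤ k, ∀ c, u ^ i * c ∈ C.annihilator → u ^ i * c ∈ D := by
    intro i hi
    induction hi using Nat.decreasingInduction with
    | self => simp [hu]
    | of_succ i hi ih =>
      intro c hc
      have hij : i + (k - (i + 1)) + 1 = k := by omega
      obtain ⟨d, hd⟩ := mem_torsionIdeal.1 <| htor i _ hij c fun t ht =>
        pow_mul_mul_eq_zero_of_mem_torsionIdeal hu hij hc ht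
      have hsplit : u ^ (i + 1) * d = u ^ i * (c + u * d) - u ^ i * c := by ring
      have hrest : u ^ (i + 1) * d ∈ D := ih d (hsplit ▸ sub_mem (hDC hd) hc)
      convert sub_mem hd hrest using 1
      ring
  refine le_antisymm (fun c hc => ?_) hDC
  simpa using peel 0 k.zero_le c (by simpa using hc)

end Torsion

section Triangular

variable {R : Type*} [CommRing R] {u A B E P P' Q Q' V V' : R}

/-- The ideal `⟨A + u P + u² Q, u B + u² V, u² E⟩`, the normal form of an ideal of a ring with
`u³ = 0` whose torsion codes of index `0`, `1`, `2` are generated by `A`, `B`, `E`. -/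
def triangularIdeal (u A B E P Q V : R) : Ideal R :=
  Ideal.span {A + u * P + u ^ 2 * Q, u * B + u ^ 2 * V, u ^ 2 * E}

lemma mem_torsionIdeal_zero_triangularIdeal :
    A ∈ torsionIdeal u (triangularIdeal u A B E P Q V) 0 :=
  mem_torsionIdeal.2 ⟨P + u * Q, Ideal.subset_span (.inl (by ring))⟩

lemma mem_torsionIdeal_one_triangularIdeal :
    B ∈ torsionIdeal u (triangularIdeal u A B E P Q V) 1 :=
  mem_torsionIdeal.2 ⟨V, Ideal.subset_span (.inr (.inl (by ring)))⟩

lemma mem_torsionIdeal_two_triangularIdeal :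
    E ∈ torsionIdeal u (triangularIdeal u A B E P Q V) 2 :=
  mem_torsionIdeal.2 ⟨0, Ideal.subset_span (.inr (.inr (by simp)))⟩

lemma triangularIdeal_le_annihilator (hu : u ^ 3 = 0)
    (hAA : A * A = 0) (hAB : A * B = 0) (hAE : A * E = 0) (hBB : B * B = 0)
    (hP : A * (P + P') = 0) (hQ : A * (Q + Q') + P * P' = 0)
    (hV : A * V + P' * B = 0) (hV' : A * V' + P * B = 0) :
    triangularIdeal u A B E P' Q' V' ≤ (triangularIdeal u A B E P Q V).annihilator := by
  simp only [triangularIdeal, Ideal.span_le, Set.insert_subset_iff, Set.singleton_subset_iff,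
    SetLike.mem_coe, Submodule.mem_annihilator_span, Subtype.forall, Set.mem_insert_iff,
    Set.mem_singleton_iff, forall_eq_or_imp, forall_eq, smul_eq_mul]
  refine ⟨⟨?_, ?_, ?_⟩, ⟨?_, ?_, ?_⟩, ?_, ?_, ?_⟩
  · linear_combination hAA + u * hP + u ^ 2 * hQ + (P' * Q + P * Q' + u * Q * Q') * hu
  · linear_combination u * hAB + u ^ 2 * hV + (P' * V + Q' * B + u * Q' * V) * hu
  · linear_combination u ^ 2 * hAE + (P' + u * Q') * E * hu
  · linear_combination u * hAB + u ^ 2 * hV' + (P * V' + Q * B + u * Q * V') * hu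
  · linear_combination u ^ 2 * hBB + (B * V + B * V' + u * V * V') * hu
  · linear_combination (B * E + u * V' * E) * hu
  · linear_combination u ^ 2 * hAE + (P + u * Q) * E * hu
  · linear_combination (B * E + u * V * E) * hu
  · linear_combination u * E * E * hu

theorem annihilator_triangularIdeal (hu : u ^ 3 = 0)
    (hAA : A * A = 0) (hAB : A * B = 0) (hAE : A * E = 0) (hBB : B * B = 0)
    (hP : A * (P + P') = 0) (hQ : A * (Q + Q') + P * P' = 0)
    (hV : A * V + P' * B = 0) (hV' : A * V' + P * B = 0)
    (hannA : ∀ c, u ^ 2 * A * c = 0 → c ∈ Ideal.span {E, u})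
    (hannB : ∀ c, u ^ 2 * B * c = 0 → c ∈ Ideal.span {B, u})
    (hannE : ∀ c, u ^ 2 * E * c = 0 → c ∈ Ideal.span {A, u}) :
    (triangularIdeal u A B E P Q V).annihilator = triangularIdeal u A B E P' Q' V' := by
  have span_le {i : ℕ} {e : R} (he : e ∈ torsionIdeal u (triangularIdeal u A B E P' Q' V') i) :
      Ideal.span {e, u} ≤ torsionIdeal u (triangularIdeal u A B E P' Q' V') i :=
    Ideal.span_le.2 (Set.pair_subset he (self_mem_torsionIdeal i))
  refine annihilator_eq_of_torsionIdeal hu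
    (triangularIdeal_le_annihilator hu hAA hAB hAE hBB hP hQ hV hV') fun i j hij c hc => ?_
  obtain ⟨rfl, rfl⟩ | ⟨rfl, rfl⟩ | ⟨rfl, rfl⟩ :
      (i = 0 ∧ j = 2) ∨ (i = 1 ∧ j = 1) ∨ (i = 2 ∧ j = 0) := by omega
  · exact span_le mem_torsionIdeal_zero_triangularIdeal
      (hannE c (hc E mem_torsionIdeal_two_triangularIdeal))
  · exact span_le mem_torsionIdeal_one_triangularIdeal
      (hannB c (hc B mem_torsionIdeal_one_triangularIdeal))
  · exact span_le mem_torsionIdeal_two_triangularIdeal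
      (hannA c (hc A mem_torsionIdeal_zero_triangularIdeal))

theorem stmt11_general {y : R} {n a t₁ t₂ : ℕ} {h₁ h₂ g : R} (htwo : (2 : R) = 0)
    (hu : u ^ 3 = 0) (hy : y ^ (2 * n) = 0)
    (hann : ∀ i j, i + j = 2 * n → ∀ c, u ^ 2 * y ^ i * c = 0 → c ∈ Ideal.span {y ^ j, u})
    (hna : n ≤ a) (han : a ≤ n + t₁) (ht₁ : t₁ ≤ n) (ht₁₂ : a + t₂ ≤ 2 * t₁)
    (hcong : h₁ - g ∈ Ideal.span {y ^ (n - t₁)}) :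
    (Ideal.span
      {y ^ a + u * y ^ t₁ * h₁ + u ^ 2 * y ^ t₂ * h₂,
       u * y ^ n + u ^ 2 * y ^ (n + t₁ - a) * g,
       u ^ 2 * y ^ (2 * n - a)}).annihilator =
    Ideal.span
      {y ^ a + u * y ^ t₁ * h₁ + u ^ 2 * y ^ t₂ * (h₂ + y ^ (2 * t₁ - (a + t₂)) * h₁ ^ 2),
       u * y ^ n + u ^ 2 * y ^ (n + t₁ - a) * h₁,
       u ^ 2 * y ^ (2 * n - a)} := by
  obtain ⟨q, hq⟩ := Ideal.mem_span_singleton.1 hcong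
  have mul_eq_zero {i j : ℕ} (hij : 2 * n ≤ i + j) : y ^ i * y ^ j = 0 := by
    rw [← pow_add, pow_eq_zero_of_le hij hy]
  have hsq : y ^ a * y ^ t₂ * y ^ (2 * t₁ - (a + t₂)) = y ^ t₁ * y ^ t₁ := by
    simp only [← pow_add]; congr 1; omega
  have hcross : y ^ a * y ^ (n + t₁ - a) = y ^ t₁ * y ^ n := by
    simp only [← pow_add]; congr 1; omega
  have hg : y ^ t₁ * y ^ (n - t₁) * y ^ n = 0 := by
    rw [← pow_add]; exact mul_eq_zero (by omega)
  simp only [mul_assoc (u ^ 2), mul_assoc u]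
  refine annihilator_triangularIdeal hu (mul_eq_zero (by omega)) (mul_eq_zero (by omega))
    (mul_eq_zero (by omega)) (mul_eq_zero (by omega)) ?_ ?_ ?_ ?_
    (hann _ _ (by omega)) (hann _ _ (by omega)) (hann _ _ (by omega))
  · linear_combination y ^ a * y ^ t₁ * h₁ * htwo
  · linear_combination h₁ ^ 2 * hsq + (y ^ a * y ^ t₂ * h₂ + (y ^ t₁ * h₁) ^ 2) * htwo
  · linear_combination g * hcross + y ^ t₁ * y ^ n * hq + q * hg + y ^ t₁ * y ^ n * g * htwo
  · linear_combination h₁ * hcross + y ^ t₁ * y ^ n * h₁ * htwo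

end Triangular

section Quotient

variable {A : Type*} [CommRing A] {v w : A}

lemma C_dvd_modByMonic_of_dvd_C_mul (hvw : ∀ r, w * r = 0 → v ∣ r) {p q : A[X]} (hq : q.Monic)
    (h : q ∣ C w * p) : C v ∣ p %ₘ q := by
  have hmod : w • (p %ₘ q) = 0 := by
    rwa [← smul_modByMonic, modByMonic_eq_zero_iff_dvd hq, smul_eq_C_mul]
  refine C_dvd_iff_dvd_coeff _ _ |>.2 fun i => hvw _ ?_
  simpa using congrArg (coeff · i) hmod

lemma mem_span_pair_of_of_mul_mk_mul_eq_zero (hvw : ∀ r, w * r = 0 → v ∣ r) {f p q : A[X]}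
    (hf : f = p * q) (hp : p.Monic) (hq : q.Monic) {c : AdjoinRoot f}
    (h : AdjoinRoot.of f w * AdjoinRoot.mk f p * c = 0) :
    c ∈ Ideal.span {AdjoinRoot.mk f q, AdjoinRoot.of f v} := by
  obtain ⟨r, rfl⟩ := AdjoinRoot.mk_surjective c
  have hdvd : q ∣ C w * r := by
    rw [← AdjoinRoot.mk_C, ← map_mul, ← map_mul, AdjoinRoot.mk_eq_zero, hf,
      mul_comm (C w), mul_assoc] at h
    exact (hp.isRegular.left.dvd_cancel_left).1 h
  obtain ⟨r', hr'⟩ := C_dvd_modByMonic_of_dvd_C_mul hvw hq hdvd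
  refine Ideal.mem_span_pair.2 ⟨AdjoinRoot.mk f (r /ₘ q), AdjoinRoot.mk f r', ?_⟩
  rw [← AdjoinRoot.mk_C, ← map_mul, ← map_mul, ← map_add]
  congr 1
  linear_combination modByMonic_add_div r q - hr'

end Quotient

section CodeRing

variable (m s : ℕ)

lemma uu_pow_three : uu m ^ 3 = 0 := by
  rw [uu, ← AdjoinRoot.mk_X, ← map_pow, AdjoinRoot.mk_self]

lemma uu_dvd_of_uu_sq_mul_eq_zero (r : R3 m) (h : uu m ^ 2 * r = 0) : uu m ∣ r := by
  obtain ⟨p, rfl⟩ := AdjoinRoot.mk_surjective r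
  rw [uu, ← AdjoinRoot.mk_X, ← map_pow, ← map_mul, AdjoinRoot.mk_eq_zero, pow_succ] at h
  exact map_dvd _ ((mul_dvd_mul_iff_left (pow_ne_zero 2 X_ne_zero)).1 h)

lemma uR_pow_three : uR m s ^ 3 = 0 := by
  rw [uR, ← map_pow, uu_pow_three, map_zero]

lemma two_eq_zero_RR : (2 : RR m s) = 0 := by
  have h := congrArg (algebraMap (Fq m) (RR m s)) (CharTwo.two_eq_zero (R := Fq m))
  rwa [map_ofNat, map_zero] at h

lemma gR_eq_X_add_one_pow : gR m s = (X + 1) ^ 2 ^ s := by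
  have h : (X + 1 : (Fq m)[X]) ^ 2 ^ s = X ^ 2 ^ s + 1 := by rw [add_pow_char_pow, one_pow]
  simpa using (congrArg (Polynomial.map (algebraMap (Fq m) (R3 m))) h).symm

lemma mk_X_add_one : AdjoinRoot.mk (gR m s) (X + 1) = xR m s + 1 := by
  rw [map_add, AdjoinRoot.mk_X, map_one, xR]

lemma xR_add_one_pow_two_pow : (xR m s + 1) ^ 2 ^ s = 0 := by
  rw [← mk_X_add_one, ← map_pow, ← gR_eq_X_add_one_pow, AdjoinRoot.mk_self]

variable {m s} in
lemma mem_span_of_uR_sq_mul_pow_mul_eq_zero {i j : ℕ} (hij : i + j = 2 ^ s) {c : RR m s}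
    (h : uR m s ^ 2 * (xR m s + 1) ^ i * c = 0) :
    c ∈ Ideal.span {(xR m s + 1) ^ j, uR m s} := by
  have hmonic (k : ℕ) : ((X + 1 : (R3 m)[X]) ^ k).Monic := (monic_X_add_C 1).pow k
  have hfactor : gR m s = (X + 1) ^ i * (X + 1) ^ j := by
    rw [← pow_add, hij, gR_eq_X_add_one_pow]
  rw [← mk_X_add_one, ← map_pow, uR, ← map_pow] at h
  rw [← mk_X_add_one, ← map_pow]
  exact mem_span_pair_of_of_mul_mk_mul_eq_zero (uu_dvd_of_uu_sq_mul_eq_zero m) hfactor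
    (hmonic i) (hmonic j) h

lemma KtoR_xK_add_one : KtoR m s (xK m s + 1) = xR m s + 1 := by
  rw [map_add, map_one, KtoR, xK, AdjoinRoot.lift_root]

variable {m s} in
lemma annSet_eq_annihilator (C : Ideal (RR m s)) : annSet m s C = C.annihilator :=
  Set.ext fun _ => Submodule.mem_annihilator.symm

end CodeRing

/-- Description of the annihilator of the code `C` of Eq. (8), where
`F(x) = h₂(x) + (x+1)^{2t₁−a−t₂} h₁(x)²`. -/
theorem stmt11 (m s : ℕ) (hm : 0 < m) (hs2 : 2 ≤ s)
    (a t₁ t₂ : ℕ) (h₁ h₂ : KK m s)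
    (hh₁ : IsUnit h₁) (hh₂ : IsUnit h₂)
    (ha1 : 2 ^ (s - 1) ≤ a) (ha2 : a ≤ 2 ^ (s - 1) + t₁)
    (ht₁ : t₁ < 2 ^ (s - 1)) (ht₁₂ : a + t₂ ≤ 2 * t₁)
    (hcong : h₁ - xK m s ^ (a - t₁) * invSub m s h₁ ∈
      Ideal.span {(xK m s + 1) ^ (2 ^ (s - 1) - t₁)})
    (C : Ideal (RR m s))
    (hC : C = Ideal.span
      {(xR m s + 1) ^ a + uR m s * (xR m s + 1) ^ t₁ * KtoR m s h₁ +
         uR m s ^ 2 * (xR m s + 1) ^ t₂ * KtoR m s h₂,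
       uR m s * (xR m s + 1) ^ (2 ^ (s - 1)) +
         uR m s ^ 2 * (xR m s + 1) ^ (2 ^ (s - 1) + t₁ - a) *
           KtoR m s (xK m s ^ (a - t₁) * invSub m s h₁),
       uR m s ^ 2 * (xR m s + 1) ^ (2 ^ s - a)})
    (hT0 : TorSet m s (C : Set (RR m s)) 0 =
      ((Ideal.span {(xK m s + 1) ^ a} : Ideal (KK m s)) : Set (KK m s)))
    (hT1 : TorSet m s (C : Set (RR m s)) 1 =
      ((Ideal.span {(xK m s + 1) ^ (2 ^ (s - 1))} : Ideal (KK m s)) : Set (KK m s)))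
    (hT2 : TorSet m s (C : Set (RR m s)) 2 =
      ((Ideal.span {(xK m s + 1) ^ (2 ^ s - a)} : Ideal (KK m s)) : Set (KK m s))) :
    annSet m s (C : Set (RR m s)) =
      ((Ideal.span
        {(xR m s + 1) ^ a + uR m s * (xR m s + 1) ^ t₁ * KtoR m s h₁ +
           uR m s ^ 2 * (xR m s + 1) ^ t₂ *
             KtoR m s (h₂ + (xK m s + 1) ^ (2 * t₁ - (a + t₂)) * h₁ ^ 2),
         uR m s * (xR m s + 1) ^ (2 ^ (s - 1)) +
           uR m s ^ 2 * (xR m s + 1) ^ (2 ^ (s - 1) + t₁ - a) * KtoR m s h₁,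
         uR m s ^ 2 * (xR m s + 1) ^ (2 ^ s - a)} : Ideal (RR m s)) : Set (RR m s)) := by
  have hN : 2 ^ s = 2 * 2 ^ (s - 1) := (mul_pow_sub_one (by omega) 2).symm
  have hcongR := Ideal.mem_map_of_mem (KtoR m s) hcong
  rw [Ideal.map_span, Set.image_singleton, map_sub, map_pow, KtoR_xK_add_one] at hcongR
  rw [annSet_eq_annihilator, hC, map_add, map_mul _ (_ ^ (2 * t₁ - _)), map_pow, map_pow,
    KtoR_xK_add_one, hN]
  exact congrArg _ <| stmt11_general (two_eq_zero_RR m s) (uR_pow_three m s)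
    (hN ▸ xR_add_one_pow_two_pow m s)
    (fun _ _ hij _ => mem_span_of_uR_sq_mul_pow_mul_eq_zero (hij.trans hN.symm))
    ha1 ha2 ht₁.le ht₁₂ hcongR
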